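/- For every real number c there exists a finite almost simple group G and a third maximal subgroup M of G with d(M) > c. -/

import Mathlib

/-- The minimal number of generators of a group `G`. -/
noncomputable def minGen (G : Type*) [Group G] : ℕ :=
  sInf {n : ℕ | ∃ S : Finset G, S.card = n ∧ Subgroup.closure (S : Set G) = ⊤}

/-- A subgroup `M` of `G` is third maximal if there is a chain `M < K < H < G`
with each subgroup maximal in the next. -/
def IsThirdMaximal {G : Type*} [Group G] (M : Subgroup G) : Prop :=
  ∃ H K : Subgroup G, IsCoatom H ∧ K ≤ H ∧ IsCoatom (K.subgroupOf H) ∧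
    M ≤ K ∧ IsCoatom (M.subgroupOf K)

/-- A finite group is almost simple if it has a nonabelian simple normal subgroup
with trivial centralizer. -/
def IsAlmostSimple (G : Type*) [Group G] : Prop :=
  ∃ S : Subgroup G, S.Normal ∧ IsSimpleGroup ↥S ∧ (¬ ∀ x y : ↥S, x * y = y * x) ∧
    Subgroup.centralizer (S : Set G) = ⊥

/-!
Let `Ω` be the set of words of length `t ≥ 2` over an alphabet of odd size larger than `3 * 4 ^ t`,
and `I` the isometry group of `Ω` for the Hamming distance. In the chain
`Sym(Ω × Bool) > Sym(2) ≀ Sym(Ω) > Sym(2) ≀ I > Sym(2) ≀ I_x`, with `I_x` the stabilizer of a word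
`x`, each group is maximal in the one before: the partition of `Ω × Bool` into pairs has a maximal
stabilizer, `I` is maximal in `Sym(Ω)`, and `I` acts primitively on `Ω`. The last group preserves
the `t + 1` spheres around `x`, and above each of them it contains a transposition of a pair. The
signs on these invariant sets therefore map it onto `(ℤ/2)^(t + 1)`, which needs `t + 1` generators.

For the maximality of `I`, suppose that `L ≥ I` is not `2`-transitive. Then `L` preserves a nonempty
graph on `Ω` whose edges have some maximal Hamming length `e < t`. For words at distance one the
number of common neighbours has order of magnitude `(t - 1).choose (e - 1)` times the `e`-th power
of the alphabet size, and for words further apart it is smaller; hence `L` preserves the pairs at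
distance one, and `L = I`. If `L` is `2`-transitive, start from the transposition of two letters in
one position, an odd permutation in `I` moving few words. Bochert's argument, taking the commutator
with a suitable conjugate, shrinks the support until a transposition or a `3`-cycle is reached, and
by Jordan's theorem `L` contains the alternating group.
-/

open Equiv Finset
open scoped commutatorElement

section ThirdMaximal

variable {G : Type*} [Group G]

theorem isCoatom_iff_map_subtype_covBy {H : Subgroup G} {K : Subgroup H} :
    IsCoatom K ↔ K.map H.subtype ⋖ H :=
  let e : Subgroup H ≃o Set.Iic H := Subgroup.MapSubtype.orderIso H
  (e.isCoatom_iff K).symm.trans Set.Iic.isCoatom_iff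

theorem isCoatom_subgroupOf_of_covBy {A B : Subgroup G} (h : A ⋖ B) :
    IsCoatom (A.subgroupOf B) := by
  rwa [isCoatom_iff_map_subtype_covBy, Subgroup.map_subgroupOf_eq_of_le h.le]

theorem isThirdMaximal_of_covBy {H K M : Subgroup G} (hH : IsCoatom H) (hK : K ⋖ H)
    (hM : M ⋖ K) : IsThirdMaximal M :=
  ⟨H, K, hH, hK.le, isCoatom_subgroupOf_of_covBy hK, hM.le, isCoatom_subgroupOf_of_covBy hM⟩

end ThirdMaximal

section AlmostSimple

variable {α : Type*} [Fintype α]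

theorem centralizer_alternatingGroup_eq_bot [DecidableEq α] (h : 4 ≤ Fintype.card α) :
    Subgroup.centralizer (alternatingGroup α : Set (Perm α)) = ⊥ := by
  have h2 : MulAction.IsMultiplyPretransitive (alternatingGroup α) α 2 :=
    have := alternatingGroup.isMultiplyPretransitive α
    have hα := Nat.card_eq_fintype_card (α := α)
    MulAction.isMultiplyPretransitive_of_le (n := Nat.card α - 2) (by lia) (by lia)
  rw [Subgroup.eq_bot_iff_forall]
  refine fun g hg ↦ Perm.ext fun x ↦ ?_
  by_contra hgx
  obtain ⟨z, hz⟩ : ∃ z, z ∉ ({x, g x} : Finset α) := by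
    by_contra! hall
    have := card_le_card (fun z _ ↦ hall z : univ ⊆ ({x, g x} : Finset α))
    have := card_le_two (a := x) (b := g x)
    rw [card_univ] at *
    lia
  simp only [mem_insert, mem_singleton, not_or] at hz
  obtain ⟨a, hax, haz⟩ := MulAction.is_two_pretransitive_iff.1 h2 (Ne.symm hgx) (Ne.symm hz.1)
  have hcomm : g (a.1 x) = a.1 (g x) :=
    (Perm.congr_fun (Subgroup.mem_centralizer_iff.1 hg a.1 a.2) x).symm
  exact hz.2 (haz.symm.trans (hcomm.symm.trans (congrArg g hax)))

theorem isAlmostSimple_perm (h : 5 ≤ Fintype.card α) : IsAlmostSimple (Perm α) := by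
  classical
  have hα := Nat.card_eq_fintype_card (α := α)
  refine ⟨alternatingGroup α, inferInstance, alternatingGroup.isSimpleGroup (by lia),
    fun hcomm ↦ ?_, centralizer_alternatingGroup_eq_bot (by lia)⟩
  have := alternatingGroup.isMulCommutative_iff_card_le_three.1 ⟨⟨hcomm⟩⟩
  lia

end AlmostSimple

section Generators

theorem minGen_eq_rank (G : Type*) [Group G] [Group.FG G] : minGen G = Group.rank G := by
  refine le_antisymm (Nat.sInf_le (Group.rank_spec G)) (le_csInf ⟨_, Group.rank_spec G⟩ ?_)
  rintro n ⟨S, rfl, hS⟩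
  exact Group.rank_le hS

theorem card_le_rank_pi_intUnits (κ : Type*) [Fintype κ] :
    Fintype.card κ ≤ Group.rank (κ → ℤˣ) := by
  classical
  have hdvd := card_dvd_exponent_pow_rank' (n := 2) (G := κ → ℤˣ)
    fun g ↦ funext fun k ↦ Int.units_sq (g k)
  exact (Nat.pow_dvd_pow_iff_le_right (x := 2) (by norm_num)).1 (by simpa using hdvd)

variable {β κ : Type*} {M : Subgroup (Perm β)} {f : β → κ}

/-- For a group `M` of permutations preserving a colouring `f`, the signs of the permutations
induced on the colour classes. -/
noncomputable def fibreSign [Fintype β] [DecidableEq β] [DecidableEq κ]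
    (hf : ∀ g ∈ M, ∀ b, f (g b) = f b) : M →* (κ → ℤˣ) where
  toFun g k := Perm.sign (g.1.subtypePerm (p := fun b ↦ f b = k) fun b ↦ by rw [hf g g.2 b])
  map_one' := funext fun _ ↦ map_one Perm.sign
  map_mul' g h := funext fun k ↦ by
    rw [Pi.mul_apply, ← Perm.sign_mul, Perm.subtypePerm_mul]
    rfl

theorem fibreSign_swap [Fintype β] [DecidableEq β] [DecidableEq κ]
    (hf : ∀ g ∈ M, ∀ b, f (g b) = f b) {p q : β} (hpq : p ≠ q) (hfpq : f p = f q)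
    (hM : swap p q ∈ M) : fibreSign hf ⟨swap p q, hM⟩ = Pi.mulSingle (f p) (-1) := by
  funext k
  obtain rfl | hk := eq_or_ne k (f p)
  · rw [Pi.mulSingle_eq_same, ← Perm.sign_swap (x := (⟨p, rfl⟩ : {b // f b = f p}))
      (y := ⟨q, hfpq.symm⟩) (by simpa using hpq)]
    refine congrArg Perm.sign (Perm.ext fun b ↦ Subtype.ext ?_)
    simp only [Perm.subtypePerm_apply, swap_apply_def, Subtype.ext_iff, apply_ite Subtype.val]
  · rw [Pi.mulSingle_eq_of_ne hk, ← Perm.sign_one (α := {b // f b = k})]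
    refine congrArg Perm.sign (Perm.ext fun b ↦ Subtype.ext ?_)
    exact swap_apply_of_ne_of_ne (fun h ↦ hk (by rw [← h, b.2]))
      (fun h ↦ hk (by rw [hfpq, ← h, b.2]))

theorem fibreSign_surjective [Fintype β] [DecidableEq β] [DecidableEq κ] [Finite κ]
    (hf : ∀ g ∈ M, ∀ b, f (g b) = f b)
    (hswap : ∀ k, ∃ p q, p ≠ q ∧ f p = k ∧ f q = k ∧ swap p q ∈ M) :
    Function.Surjective (fibreSign hf) := by
  have := Fintype.ofFinite κ
  rw [← MonoidHom.range_eq_top, eq_top_iff]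
  rintro ε -
  rw [← univ_prod_mulSingle ε]
  refine Subgroup.prod_mem _ fun k _ ↦ ?_
  obtain hε | hε := Int.units_eq_one_or (ε k)
  · simp only [hε, Pi.mulSingle_one, one_mem]
  · obtain ⟨p, q, hpq, rfl, hq, hM⟩ := hswap k
    exact ⟨⟨_, hM⟩, by rw [fibreSign_swap hf hpq hq.symm hM, hε]⟩

theorem card_le_rank_of_swap_mem [Finite β] [DecidableEq β] [Fintype κ]
    (hf : ∀ g ∈ M, ∀ b, f (g b) = f b)
    (hswap : ∀ k, ∃ p q, p ≠ q ∧ f p = k ∧ f q = k ∧ swap p q ∈ M) :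
    Fintype.card κ ≤ Group.rank M := by
  classical
  have := Fintype.ofFinite β
  exact (card_le_rank_pi_intUnits κ).trans
    (Group.rank_le_of_surjective _ (fibreSign_surjective hf hswap))

end Generators

section Wreath

variable {Ω F : Type*}

variable (F) in
/-- The imprimitive wreath product `Sym(F) ≀ X`: all permutations of `Ω × F` that permute the fibres
of the first projection according to an element of `X`. -/
def imprimitiveWreath (X : Subgroup (Perm Ω)) : Subgroup (Perm (Ω × F)) where
  carrier := {g | ∃ σ ∈ X, ∀ p, (g p).1 = σ p.1}
  mul_mem' := by
    rintro g h ⟨σ, hσ, hg⟩ ⟨τ, hτ, hh⟩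
    exact ⟨σ * τ, X.mul_mem hσ hτ, fun p ↦ by simp [hg, hh]⟩
  one_mem' := ⟨1, X.one_mem, fun _ ↦ rfl⟩
  inv_mem' := by
    rintro g ⟨σ, hσ, hg⟩
    exact ⟨σ⁻¹, X.inv_mem hσ, fun p ↦ by
      rw [Perm.eq_inv_iff_eq, ← hg, Perm.inv_def, apply_symm_apply]⟩

theorem mem_imprimitiveWreath {X : Subgroup (Perm Ω)} {g : Perm (Ω × F)} :
    g ∈ imprimitiveWreath F X ↔ ∃ σ ∈ X, ∀ p, (g p).1 = σ p.1 :=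
  Iff.rfl

variable (F) in
/-- The complement of the base group in the imprimitive wreath product: permutations of `Ω` acting
on `Ω × F` through the first coordinate. -/
def prodPermHom : Perm Ω →* Perm (Ω × F) where
  toFun σ := σ.prodCongr (Equiv.refl F)
  map_one' := rfl
  map_mul' _ _ := rfl

theorem prodPermHom_apply (σ : Perm Ω) (p : Ω × F) : prodPermHom F σ p = (σ p.1, p.2) :=
  rfl

theorem prodPermHom_mem_imprimitiveWreath {X : Subgroup (Perm Ω)} {σ : Perm Ω} (hσ : σ ∈ X) :
    prodPermHom F σ ∈ imprimitiveWreath F X :=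
  ⟨σ, hσ, fun _ ↦ rfl⟩

theorem imprimitiveWreath_mono {A B : Subgroup (Perm Ω)} (h : A ≤ B) :
    imprimitiveWreath F A ≤ imprimitiveWreath F B :=
  fun _ ⟨σ, hσ, hg⟩ ↦ ⟨σ, h hσ, hg⟩

theorem comap_imprimitiveWreath [Nonempty F] (X : Subgroup (Perm Ω)) :
    (imprimitiveWreath F X).comap (prodPermHom F) = X := by
  refine le_antisymm ?_ fun σ ↦ prodPermHom_mem_imprimitiveWreath
  rintro σ ⟨τ, hτ, h⟩
  have hστ : σ = τ := Perm.ext fun x ↦ h (x, Classical.arbitrary F)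
  rwa [hστ]

theorem imprimitiveWreath_comap {C : Subgroup (Perm (Ω × F))} (hbot : imprimitiveWreath F ⊥ ≤ C)
    (htop : C ≤ imprimitiveWreath F ⊤) : imprimitiveWreath F (C.comap (prodPermHom F)) = C := by
  have hbase {g : Perm (Ω × F)} {σ : Perm Ω} (h : ∀ p, (g p).1 = σ p.1) :
      (prodPermHom F σ)⁻¹ * g ∈ C :=
    hbot ⟨1, one_mem _, fun p ↦ by simp [← map_inv, prodPermHom_apply, h]⟩
  refine le_antisymm ?_ fun g hg ↦ ?_
  · rintro g ⟨σ, hσ, h⟩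
    exact (Subgroup.mul_mem_cancel_left _ (C.inv_mem hσ)).1 (hbase h)
  · obtain ⟨σ, -, h⟩ := htop hg
    exact ⟨σ, C.inv_mem_iff.1 ((Subgroup.mul_mem_cancel_right _ hg).1 (hbase h)), h⟩

theorem imprimitiveWreath_covBy [Nonempty F] {A B : Subgroup (Perm Ω)} (h : A ⋖ B) :
    imprimitiveWreath F A ⋖ imprimitiveWreath F B := by
  have hinj : Function.Injective (imprimitiveWreath F : Subgroup (Perm Ω) → _) :=
    Function.LeftInverse.injective comap_imprimitiveWreath
  refine covBy_of_eq_or_eq ?_ fun C hAC hCB ↦ ?_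
  · exact (imprimitiveWreath_mono h.le).lt_of_ne (hinj.ne h.ne)
  · have hC := imprimitiveWreath_comap ((imprimitiveWreath_mono bot_le).trans hAC)
      (hCB.trans (imprimitiveWreath_mono le_top))
    have hA := Subgroup.comap_mono (f := prodPermHom F) hAC
    have hB := Subgroup.comap_mono (f := prodPermHom F) hCB
    rw [comap_imprimitiveWreath] at hA hB
    exact (h.eq_or_eq hA hB).imp (fun hCA ↦ by rw [← hC, hCA]) (fun hCB ↦ by rw [← hC, hCB])

theorem swap_mem_imprimitiveWreath [DecidableEq Ω] [DecidableEq F] (X : Subgroup (Perm Ω))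
    {p q : Ω × F} (h : p.1 = q.1) : swap p q ∈ imprimitiveWreath F X := by
  refine ⟨1, X.one_mem, fun r ↦ ?_⟩
  rw [Perm.one_apply, swap_apply_def]
  split_ifs with hp hq
  · rw [hp, h]
  · rw [hq, h]
  · rfl

theorem exists_mem_imprimitiveWreath_top {p q p' q' : Ω × F} (h : p.1 ≠ q.1) (h' : p'.1 ≠ q'.1) :
    ∃ g ∈ imprimitiveWreath F (⊤ : Subgroup (Perm Ω)), g p = p' ∧ g q = q' := by
  classical
  obtain ⟨σ, hσp, hσq⟩ := MulAction.is_two_pretransitive_iff.1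
    (Perm.isMultiplyPretransitive Ω 2) h h'
  rw [Perm.smul_def] at hσp hσq
  refine ⟨swap (p'.1, p.2) p' * swap (q'.1, q.2) q' * prodPermHom F σ, ?_, ?_, ?_⟩
  · exact mul_mem (mul_mem (swap_mem_imprimitiveWreath _ rfl) (swap_mem_imprimitiveWreath _ rfl))
      (prodPermHom_mem_imprimitiveWreath trivial)
  · rw [Perm.mul_apply, Perm.mul_apply, prodPermHom_apply, hσp, swap_apply_of_ne_of_ne (b := q'),
      swap_apply_left]
    all_goals exact fun heq ↦ h' (congrArg Prod.fst heq :)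
  · rw [Perm.mul_apply, Perm.mul_apply, prodPermHom_apply, hσq, swap_apply_left,
      swap_apply_of_ne_of_ne]
    all_goals exact fun heq ↦ h' (congrArg Prod.fst heq).symm

theorem mem_imprimitiveWreath_top [Finite Ω] [Nonempty F] {g : Perm (Ω × F)} :
    g ∈ imprimitiveWreath F (⊤ : Subgroup (Perm Ω)) ↔ ∀ p q, p.1 = q.1 → (g p).1 = (g q).1 := by
  refine ⟨fun ⟨σ, _, hσ⟩ p q h ↦ by rw [hσ, hσ, h], fun h ↦ ?_⟩
  let b := Classical.arbitrary F
  have hsurj : Function.Surjective fun x ↦ (g (x, b)).1 := fun z ↦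
    ⟨(g.symm (z, b)).1, by simp only [h (_, b) (g.symm (z, b)) rfl, apply_symm_apply]⟩
  exact ⟨Equiv.ofBijective _ ⟨Finite.injective_iff_surjective.2 hsurj, hsurj⟩, trivial,
    fun p ↦ h p (p.1, b) rfl⟩

theorem imprimitiveWreath_top_ne_top [Nontrivial Ω] [Nontrivial F] :
    imprimitiveWreath F (⊤ : Subgroup (Perm Ω)) ≠ ⊤ := by
  classical
  intro htop
  obtain ⟨x, y, hxy⟩ := exists_pair_ne Ω
  obtain ⟨a, b, hab⟩ := exists_pair_ne F
  obtain ⟨σ, -, hσ⟩ := htop.ge (Subgroup.mem_top (swap (x, a) (y, a)))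
  have ha := hσ (x, a)
  have hb := hσ (x, b)
  rw [swap_apply_left] at ha
  rw [swap_apply_of_ne_of_ne (by simpa using hab.symm) (by simp [hxy])] at hb
  exact hxy (hb.trans ha.symm)

theorem isCoatom_imprimitiveWreath_top [Finite Ω] [Finite F] [Nontrivial Ω] [Nontrivial F] :
    IsCoatom (imprimitiveWreath F (⊤ : Subgroup (Perm Ω))) := by
  classical
  have := Fintype.ofFinite Ω
  have := Fintype.ofFinite F
  refine ⟨imprimitiveWreath_top_ne_top, fun J hJ ↦ ?_⟩
  have hconj {g : Perm (Ω × F)} (hg : g ∈ J) {p q : Ω × F} (hpq : swap p q ∈ J) :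
      swap (g p) (g q) ∈ J := by
    rw [swap_apply_apply]
    exact mul_mem (mul_mem hg hpq) (inv_mem hg)
  obtain ⟨g, hgJ, hg⟩ := SetLike.exists_of_lt hJ
  rw [mem_imprimitiveWreath_top] at hg
  push Not at hg
  obtain ⟨p, q, hpq, hgpq⟩ := hg
  rw [eq_top_iff, ← Perm.closure_isSwap, Subgroup.closure_le]
  rintro _ ⟨p', q', -, rfl⟩
  by_cases h : p'.1 = q'.1
  · exact hJ.le (swap_mem_imprimitiveWreath ⊤ h)
  · obtain ⟨k, hk, rfl, rfl⟩ := exists_mem_imprimitiveWreath_top hgpq h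
    exact hconj (hJ.le hk) (hconj hgJ (hJ.le (swap_mem_imprimitiveWreath ⊤ hpq)))

end Wreath

section Averaging

variable {K X : Type*} [Group K] [Fintype X] [DecidableEq X] [MulAction K X]
  [MulAction.IsPretransitive K X]

theorem card_filter_smul_eq_mul_card [Fintype K] (x y : X) :
    #{g : K | g • x = y} * Fintype.card X = Fintype.card K := by
  have hfibre (z : X) : #{g : K | g • x = z} = #{g : K | g • x = y} := by
    obtain ⟨h, rfl⟩ := MulAction.exists_smul_eq K z y
    exact card_equiv (Equiv.mulLeft h) fun g ↦ by simp [mul_smul]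
  calc #{g : K | g • x = y} * Fintype.card X = ∑ z : X, #{g : K | g • x = z} := by
        simp only [hfibre, sum_const, smul_eq_mul, mul_comm, card_univ]
    _ = Fintype.card K := (card_eq_sum_card_fiberwise (by simp)).symm

theorem card_filter_smul_mem_mul_card [Fintype K] (x : X) (A : Finset X) :
    #{g : K | g • x ∈ A} * Fintype.card X = #A * Fintype.card K := by
  rw [card_eq_sum_card_fiberwise (f := (· • x)) (t := A) (by intro; simp), sum_mul,
    sum_const_nat (m := Fintype.card K)]
  intro y hy
  rw [← card_filter_smul_eq_mul_card (K := K) x y, filter_filter]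
  congr 3
  grind

variable (K) in
/-- Average the left-hand side over all `g` moving `x` out of `A`. -/
theorem exists_smul_notMem_card_filter_smul_mem_mul_card_compl_le [Finite K] {x : X} {A : Finset X}
    (hx : x ∈ A) (hA : A ≠ univ) :
    ∃ g : K, g • x ∉ A ∧ #{a ∈ A | g • a ∈ A} * #Aᶜ ≤ (#A - 1) * #A := by
  have := Fintype.ofFinite K
  have hX : 0 < Fintype.card X := Fintype.card_pos_iff.2 ⟨x⟩
  set S : Finset K := {g | g • x ∈ Aᶜ} with hS
  have hScard : #S * Fintype.card X = #Aᶜ * Fintype.card K := card_filter_smul_mem_mul_card x Aᶜ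
  have hSne : S.Nonempty := by
    obtain ⟨y, hy⟩ : Aᶜ.Nonempty := nonempty_iff_ne_empty.2 fun h ↦ hA (compl_eq_empty_iff _ |>.1 h)
    obtain ⟨g, rfl⟩ := MulAction.exists_smul_eq K x y
    exact ⟨g, by simpa [hS] using hy⟩
  have hcount : ∑ g ∈ S, #{a ∈ A | g • a ∈ A} ≤ ∑ a ∈ A.erase x, #{g : K | g • a ∈ A} := by
    refine (sum_card_bipartiteAbove_eq_sum_card_bipartiteBelow fun g a ↦ g • a ∈ A).trans_le ?_
    rw [← sum_erase A (a := x)]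
    · exact sum_le_sum fun a _ ↦ card_le_card (filter_subset_filter _ (subset_univ _))
    · rw [card_eq_zero, bipartiteBelow]
      exact filter_eq_empty_iff.2 fun g hg ↦ by simpa [hS] using hg
  have hsum : ∑ g ∈ S, #{a ∈ A | g • a ∈ A} * #Aᶜ ≤ ∑ _g ∈ S, (#A - 1) * #A := by
    refine le_of_mul_le_mul_right (a := Fintype.card X) ?_ hX
    calc (∑ g ∈ S, #{a ∈ A | g • a ∈ A} * #Aᶜ) * Fintype.card X
        ≤ (∑ a ∈ A.erase x, #{g : K | g • a ∈ A}) * #Aᶜ * Fintype.card X := by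
          rw [← sum_mul]; gcongr
      _ = (∑ a ∈ A.erase x, #{g : K | g • a ∈ A} * Fintype.card X) * #Aᶜ := by
          rw [← sum_mul]; ring
      _ = (∑ _g ∈ S, (#A - 1) * #A) * Fintype.card X := by
          simp only [card_filter_smul_mem_mul_card, sum_const, card_erase_of_mem hx, smul_eq_mul]
          linear_combination (#A - 1) * #A * hScard.symm
  obtain ⟨g, hg, hle⟩ := exists_le_of_sum_le hSne hsum
  exact ⟨g, by simpa [hS] using hg, hle⟩

end Averaging

section Bochert

variable {Ω : Type*} [Fintype Ω] [DecidableEq Ω]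

theorem support_commutator_subset (x y : Perm Ω) :
    ⁅x, y⁆.support ⊆ (x.support ∩ y.support) ∪
      ((x.support ∩ y.support).image x ∪ (x.support ∩ y.support).image y) := by
  intro z hz
  by_contra hc
  have hxz : x⁻¹ z ∉ x.support ∩ y.support := fun h ↦ hc <| by
    rw [mem_union, mem_union]; exact .inr (.inl (mem_image.2 ⟨_, h, by simp⟩))
  have hyz : y⁻¹ z ∉ x.support ∩ y.support := fun h ↦ hc <| by
    rw [mem_union, mem_union]; exact .inr (.inr (mem_image.2 ⟨_, h, by simp⟩))
  have hz' : z ∉ x.support ∩ y.support := fun h ↦ hc (mem_union_left _ h)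
  simp only [mem_inter, not_and_or, Perm.notMem_support] at hxz hyz hz'
  have hcomm : x⁻¹ (y⁻¹ z) = y⁻¹ (x⁻¹ z) := by
    grind [Perm.inv_eq_iff_eq]
  rw [Perm.mem_support, commutatorElement_def, Perm.mul_apply, Perm.mul_apply, Perm.mul_apply,
    hcomm] at hz
  simp at hz

theorem card_support_commutator_le (x y : Perm Ω) :
    #⁅x, y⁆.support ≤ 3 * #(x.support ∩ y.support) := by
  set I := x.support ∩ y.support
  calc #⁅x, y⁆.support ≤ #(I ∪ (I.image x ∪ I.image y)) :=
        card_le_card (support_commutator_subset x y)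
    _ ≤ #I + (#I + #I) := (card_union_le _ _).trans <| add_le_add_right
        ((card_union_le _ _).trans (add_le_add card_image_le card_image_le)) _
    _ = 3 * #I := by ring

variable {J : Subgroup (Perm Ω)}

theorem exists_mem_apply_notMem_card_filter_mul_card_compl_le
    (hJ : MulAction.IsMultiplyPretransitive J Ω 2) {Δ : Finset Ω} {β γ : Ω} (hβ : β ∈ Δ)
    (hγ : γ ∈ Δ) (hne : γ ≠ β) (hΔ : Δ ≠ univ) :
    ∃ g ∈ J, g β = β ∧ g γ ∉ Δ ∧
      #{a ∈ Δ.erase β | g a ∈ Δ} * #Δᶜ ≤ (#Δ - 2) * (#Δ - 1) := by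
  have hβtrans : MulAction.IsPretransitive (MulAction.stabilizer J β)
      (SubMulAction.ofStabilizer J β) := by
    have := MulAction.isPretransitive_of_is_two_pretransitive (G := J) (α := Ω)
    rw [← MulAction.is_one_pretransitive_iff]
    exact SubMulAction.ofStabilizer.isMultiplyPretransitive.1 hJ
  have := Fintype.ofFinite (SubMulAction.ofStabilizer J β)
  set A : Finset (SubMulAction.ofStabilizer J β) := {a | a.1 ∈ Δ} with hA
  have hcardA : #A = #Δ - 1 := by
    rw [← card_erase_of_mem hβ, ← card_map (Function.Embedding.subtype _)]
    congr 1
    ext a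
    simp [hA, SubMulAction.mem_ofStabilizer_iff, and_comm]
  have hcardAc : #Aᶜ = #Δᶜ := by
    have hcard := SubMulAction.nat_card_ofStabilizer_add_one_eq J β
    rw [Nat.card_eq_fintype_card, Nat.card_eq_fintype_card] at hcard
    have := card_pos.2 ⟨β, hβ⟩
    rw [card_compl, card_compl, hcardA]
    lia
  have hAuniv : A ≠ univ := by
    rw [Ne, ← compl_eq_empty_iff, ← card_eq_zero, hcardAc, card_eq_zero, compl_eq_empty_iff]
    exact hΔ
  obtain ⟨⟨g, hgβ⟩, hgγ, hle⟩ :=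
    exists_smul_notMem_card_filter_smul_mem_mul_card_compl_le (MulAction.stabilizer J β)
      (x := ⟨γ, hne⟩) (mem_filter.2 ⟨mem_univ _, hγ⟩) hAuniv
  refine ⟨g, g.2, hgβ, fun h ↦ hgγ (mem_filter.2 ⟨mem_univ _, h⟩), ?_⟩
  rw [hcardA, hcardAc, Nat.sub_sub, one_add_one_eq_two] at hle
  convert hle using 2
  rw [← card_map (Function.Embedding.subtype _)]
  congr 1
  ext a
  have hsmul : g • a = g.1 a := rfl
  simp [SubMulAction.mem_ofStabilizer_iff, hsmul, and_assoc, and_comm, and_left_comm]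

/-- Take for `y` the commutator of `x` with a conjugate whose support meets that of `x` in few
points. -/
theorem exists_mem_card_support_lt (hJ : MulAction.IsMultiplyPretransitive J Ω 2) {x : Perm Ω}
    (hx : x ∈ J) (hfour : 4 ≤ #x.support) (hcard : 4 * #x.support + 6 < Fintype.card Ω) :
    ∃ y ∈ J, y ≠ 1 ∧ #y.support < #x.support := by
  obtain ⟨β, hβ⟩ : x.support.Nonempty := card_pos.1 (by omega)
  have hcompl := card_compl x.support
  obtain ⟨g, hgJ, hgβ, hgx, hle⟩ := exists_mem_apply_notMem_card_filter_mul_card_compl_le hJ hβ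
    (Perm.apply_mem_support.2 hβ) (Perm.mem_support.1 hβ) (fun h ↦ by simp [h] at hcard; omega)
  set m := #{a ∈ x.support.erase β | g a ∈ x.support}
  set y := g * x * g⁻¹ with hy
  have hyβ : y β = g (x β) := by
    rw [hy, Perm.mul_apply, Perm.mul_apply, Perm.inv_eq_iff_eq.2 hgβ.symm]
  have hyJ : y ∈ J := mul_mem (mul_mem hgJ hx) (inv_mem hgJ)
  have hinter : #(x.support ∩ y.support) ≤ m + 1 := by
    have hconj : x.support ∩ y.support ⊆
        (insert β {a ∈ x.support.erase β | g a ∈ x.support}).image g := by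
      intro a ha
      obtain ⟨b, rfl⟩ := g.surjective a
      obtain ⟨hgb, hyb⟩ := mem_inter.1 ha
      have hb : b ∈ x.support := by simpa [hy, Perm.mem_support] using hyb
      refine mem_image_of_mem g ?_
      rw [mem_insert, mem_filter, mem_erase]
      tauto
    exact (card_le_card hconj).trans (card_image_le.trans (card_insert_le _ _))
  refine ⟨⁅x, y⁆, ?_, fun h ↦ ?_, ?_⟩
  · exact mul_mem (mul_mem (mul_mem hx hyJ) (inv_mem hx)) (inv_mem hyJ)
  · rw [commutatorElement_eq_one_iff_mul_comm] at h
    have hxβ := Perm.congr_fun h β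
    rw [Perm.mul_apply x, Perm.mul_apply y, hyβ, Perm.notMem_support.1 hgx, ← hyβ] at hxβ
    exact Perm.mem_support.1 hβ (y.injective hxβ).symm
  · have := card_support_commutator_le x y
    obtain ⟨k, hk⟩ := Nat.exists_eq_add_of_le hfour
    have hmul : m * (3 * (k + 4) + 7) ≤ (k + 2) * (k + 3) := by
      refine (Nat.mul_le_mul_left m (by omega)).trans (hle.trans_eq ?_)
      rw [hk]; congr 1 <;> omega
    by_contra! hge
    have : k + 1 ≤ 3 * m := by omega
    nlinarith

theorem alternatingGroup_le_of_isMultiplyPretransitive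
    (hJ : MulAction.IsMultiplyPretransitive J Ω 2) {x : Perm Ω} (hx : x ∈ J) (hx1 : x ≠ 1)
    (hcard : 4 * #x.support + 6 < Fintype.card Ω) : alternatingGroup Ω ≤ J := by
  have hprim : MulAction.IsPreprimitive J Ω := MulAction.isPreprimitive_of_is_two_pretransitive hJ
  induction hs : #x.support using Nat.strong_induction_on generalizing x with | _ s ih
  have htwo := Perm.two_le_card_support_of_ne_one hx1
  obtain hs2 | hs3 | hs4 : #x.support = 2 ∨ #x.support = 3 ∨ 4 ≤ #x.support := by omega
  · rw [Perm.subgroup_eq_top_of_isPreprimitive_of_isSwap_mem hprim x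
      (Perm.card_support_eq_two.1 hs2) hx]
    exact le_top
  · exact Perm.alternatingGroup_le_of_isPreprimitive_of_isThreeCycle_mem hprim
      (card_support_eq_three_iff.1 hs3) hx
  · obtain ⟨y, hy, hy1, hlt⟩ := exists_mem_card_support_lt hJ hx hs4 hcard
    exact ih _ (hs ▸ hlt) hy hy1 (by omega) rfl

end Bochert

section Hamming

variable {ι α : Type*} [Fintype ι] [DecidableEq α]

/-- The group of isometries of the Hamming space of words `ι → α`. -/
def hammingIsometries (ι α : Type*) [Fintype ι] [DecidableEq α] : Subgroup (Perm (ι → α)) where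
  carrier := {g | ∀ x y, hammingDist (g x) (g y) = hammingDist x y}
  mul_mem' hg hh x y := (hg _ _).trans (hh x y)
  one_mem' _ _ := rfl
  inv_mem' {g} hg x y := by
    simpa [Perm.inv_def] using (hg (g⁻¹ x) (g⁻¹ y)).symm

/-- The coordinates in which two words differ; their number is the Hamming distance. -/
def hammingDiff (x y : ι → α) : Finset ι := {i | x i ≠ y i}

theorem mem_hammingDiff {x y : ι → α} {i : ι} : i ∈ hammingDiff x y ↔ x i ≠ y i := by
  simp [hammingDiff]

theorem card_hammingDiff (x y : ι → α) : #(hammingDiff x y) = hammingDist x y := rfl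

theorem hammingDiff_subset_union [DecidableEq ι] (x y z : ι → α) :
    hammingDiff x y ⊆ hammingDiff x z ∪ hammingDiff y z := by
  intro i
  simp only [mem_union, mem_hammingDiff]
  grind

theorem hammingDiff_update [DecidableEq ι] (x y : ι → α) (i : ι) :
    hammingDiff x (Function.update y i (x i)) = (hammingDiff x y).erase i := by
  ext j
  rcases eq_or_ne j i with rfl | hj <;> simp [mem_hammingDiff, *]

theorem hammingDiff_update_self [DecidableEq ι] {x : ι → α} {i : ι} {v : α} (hv : v ≠ x i) :
    hammingDiff x (Function.update x i v) = {i} := by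
  ext j
  rcases eq_or_ne j i with rfl | hj <;> simp [mem_hammingDiff, *, hv.symm]

theorem hammingDist_update_self [DecidableEq ι] {x : ι → α} {i : ι} {v : α} (hv : v ≠ x i) :
    hammingDist x (Function.update x i v) = 1 := by
  rw [← card_hammingDiff, hammingDiff_update_self hv, card_singleton]

theorem exists_hammingDist_eq_of_eq_add_one {x y : ι → α} {d : ℕ} (h : hammingDist x y = d + 1) :
    ∃ z, hammingDist x z = d ∧ hammingDist y z = 1 := by
  classical
  have hxy : x ≠ y := hammingDist_ne_zero.1 (by omega)
  obtain ⟨i, hi⟩ := Function.ne_iff.1 hxy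
  refine ⟨Function.update y i (x i), ?_, hammingDist_update_self hi⟩
  rw [← card_hammingDiff, hammingDiff_update, card_erase_of_mem (mem_hammingDiff.2 hi),
    card_hammingDiff, h, Nat.add_sub_cancel]

theorem piCongr_mem_hammingIsometries (σ : Perm ι) (π : ι → Perm α) :
    Equiv.piCongr (W := fun _ ↦ α) (Z := fun _ ↦ α) σ π ∈ hammingIsometries ι α := by
  intro x y
  refine (card_equiv σ fun i ↦ ?_).symm
  simp [Equiv.piCongr_apply_apply]

/-- Permuting the coordinates and then the letters in each coordinate suffices. -/
theorem exists_mem_hammingIsometries_apply_eq [Finite α] {x y x' y' : ι → α}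
    (h : hammingDist x y = hammingDist x' y') :
    ∃ g ∈ hammingIsometries ι α, g x = x' ∧ g y = y' := by
  classical
  obtain ⟨σ, hσ⟩ : ∃ σ : Perm ι, ∀ i, x i = y i ↔ x' (σ i) = y' (σ i) := by
    let e : {i // x i ≠ y i} ≃ {i // x' i ≠ y' i} :=
      Fintype.equivOfCardEq (by rwa [Fintype.card_subtype, Fintype.card_subtype])
    refine ⟨e.extendSubtype, fun i ↦ not_iff_not.1 ⟨e.extendSubtype_mem i, fun hi ↦ ?_⟩⟩
    exact not_imp_not.1 (e.extendSubtype_not_mem i) hi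
  have hπ (i : ι) : ∃ π : Perm α, π (x i) = x' (σ i) ∧ π (y i) = y' (σ i) := by
    by_cases hi : x i = y i
    · exact ⟨swap (x i) (x' (σ i)), by simp [← hi, ← (hσ i).1 hi]⟩
    · exact MulAction.is_two_pretransitive_iff.1 (Perm.isMultiplyPretransitive α 2) hi
        (mt (hσ i).2 hi)
  choose π hπx hπy using hπ
  refine ⟨_, piCongr_mem_hammingIsometries σ π, funext fun k ↦ ?_, funext fun k ↦ ?_⟩ <;>
    obtain ⟨i, rfl⟩ := σ.surjective k
  · rw [Equiv.piCongr_apply_apply, hπx]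
  · rw [Equiv.piCongr_apply_apply, hπy]

theorem hammingDist_apply_le {g : Perm (ι → α)}
    (hg : ∀ x y, hammingDist x y = 1 → hammingDist (g x) (g y) = 1) (x y : ι → α) :
    hammingDist (g x) (g y) ≤ hammingDist x y := by
  induction hd : hammingDist x y generalizing y with
  | zero => simp [hammingDist_eq_zero.1 hd]
  | succ d ih =>
    obtain ⟨z, hxz, hyz⟩ := exists_hammingDist_eq_of_eq_add_one hd
    have hgz := hg z y (hammingDist_comm y z ▸ hyz)
    have := hammingDist_triangle (g x) (g z) (g y)
    have := ih z hxz
    omega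

/-- The Hamming distance is the path metric of the graph of pairs at distance one. -/
theorem le_hammingIsometries {L : Subgroup (Perm (ι → α))}
    (hL : ∀ g ∈ L, ∀ x y, hammingDist x y = 1 → hammingDist (g x) (g y) = 1) :
    L ≤ hammingIsometries ι α := by
  intro g hg x y
  refine (hammingDist_apply_le (hL g hg) x y).antisymm ?_
  simpa [Perm.inv_def] using hammingDist_apply_le (hL g⁻¹ (L.inv_mem hg)) (g x) (g y)

open scoped Pointwise in
theorem mem_of_isBlock_hammingIsometries [Finite α] {B : Set (ι → α)}
    (hB : MulAction.IsBlock (hammingIsometries ι α) B) {x y x' y' : ι → α} (hx : x ∈ B)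
    (hx' : x' ∈ B) (hy : y ∈ B) (h : hammingDist x y = hammingDist x' y') : y' ∈ B := by
  obtain ⟨g, hg, rfl, rfl⟩ := exists_mem_hammingIsometries_apply_eq h
  have hgB := MulAction.isBlock_iff_smul_eq_of_mem.1 hB (g := ⟨g, hg⟩) hx hx'
  exact hgB ▸ Set.smul_mem_smul_set hy

/-- A block containing two words contains, by changing a letter in which they differ to a third
one, two words at distance one; hence it is closed under passing to neighbours. -/
theorem isPreprimitive_hammingIsometries [Finite α] (hα : 2 < Nat.card α) :
    MulAction.IsPreprimitive (hammingIsometries ι α) (ι → α) where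
  exists_smul_eq x y := by
    obtain ⟨g, hg, hgx, -⟩ := exists_mem_hammingIsometries_apply_eq (x := x) (y := x) (x' := y)
      (y' := y) (by simp)
    exact ⟨⟨g, hg⟩, hgx⟩
  isTrivialBlock_of_isBlock {B} hB := by
    classical
    refine (Set.subsingleton_or_nontrivial B).imp_right ?_
    rintro ⟨x, hx, y, hy, hxy⟩
    obtain ⟨i, hi⟩ := Function.ne_iff.1 hxy
    obtain ⟨v, hvx, hvy⟩ : ∃ v, v ≠ x i ∧ v ≠ y i :=
      ENat.exists_ne_ne_of_three_le (by rw [ENat.card_eq_coe_natCard]; exact_mod_cast hα) _ _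
    have hy' : Function.update y i v ∈ B := by
      refine mem_of_isBlock_hammingIsometries hB hx hx hy ?_
      rw [← card_hammingDiff, ← card_hammingDiff]
      congr 1
      ext j
      rcases eq_or_ne j i with rfl | hj <;> simp [mem_hammingDiff, *, hvx.symm]
    have hB1 {z w : ι → α} (hz : z ∈ B) (hzw : hammingDist z w = 1) : w ∈ B :=
      mem_of_isBlock_hammingIsometries hB hy hz hy' (by rw [hammingDist_update_self hvy, hzw])
    refine Set.eq_univ_of_forall fun w ↦ ?_
    induction hd : hammingDist x w generalizing w with
    | zero => rwa [← hammingDist_eq_zero.1 hd]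
    | succ d ih =>
      obtain ⟨z, hxz, hwz⟩ := exists_hammingDist_eq_of_eq_add_one hd
      exact hB1 (ih z hxz) (hammingDist_comm w z ▸ hwz)

end Hamming

section Counting

variable {ι α : Type*} [Fintype ι]

/-- The sets of size `e` containing `I`. -/
def supersetsOfCard [DecidableEq ι] (e : ℕ) (I : Finset ι) : Finset (Finset ι) :=
  {E | #E = e ∧ I ⊆ E}

variable [DecidableEq ι]

theorem mem_supersetsOfCard {e : ℕ} {I E : Finset ι} :
    E ∈ supersetsOfCard e I ↔ #E = e ∧ I ⊆ E := by
  simp [supersetsOfCard]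

theorem card_supersetsOfCard_lt {e : ℕ} {I J : Finset ι} (he : e < Fintype.card ι) (hIJ : I ⊂ J)
    (hI : #I ≤ e) : #(supersetsOfCard e J) < #(supersetsOfCard e I) := by
  refine card_lt_card (ssubset_iff_of_subset (fun E hE ↦ ?_) |>.2 ?_)
  · rw [mem_supersetsOfCard] at hE ⊢
    exact ⟨hE.1, hIJ.1.trans hE.2⟩
  · obtain ⟨j, hjJ, hjI⟩ := exists_of_ssubset hIJ
    obtain ⟨E, hIE, hEj, hE⟩ := exists_subsuperset_card_eq (t := {j}ᶜ) (n := e)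
      (by simpa using hjI) hI (by rw [card_compl, card_singleton]; omega)
    refine ⟨E, mem_supersetsOfCard.2 ⟨hE, hIE⟩, fun h ↦ ?_⟩
    simpa using hEj ((mem_supersetsOfCard.1 h).2 hjJ)

variable [Fintype α] [DecidableEq α]

theorem card_filter_forall_notMem_mem_le (E : Finset ι) (A : ι → Finset α) {k : ℕ}
    (hA : ∀ i, #(A i) ≤ k) :
    #{z : ι → α | ∀ i ∉ E, z i ∈ A i} ≤ Fintype.card α ^ #E * k ^ #Eᶜ := by
  have h : ({z | ∀ i ∉ E, z i ∈ A i} : Finset (ι → α)) =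
      Fintype.piFinset fun i ↦ if i ∈ E then univ else A i := by
    ext z
    simp only [mem_filter_univ, Fintype.mem_piFinset]
    exact forall_congr' fun i ↦ by by_cases hi : i ∈ E <;> simp [hi]
  rw [h, Fintype.card_piFinset, ← prod_mul_prod_compl E]
  refine Nat.mul_le_mul (prod_le_pow_card _ _ _ fun i hi ↦ ?_)
    (prod_le_pow_card _ _ _ fun i hi ↦ ?_)
  · simp [hi]
  · simpa [mem_compl.1 hi] using hA i

theorem card_filter_hammingDiff_eq_le (x : ι → α) (E : Finset ι) :
    #{z | hammingDiff x z = E} ≤ Fintype.card α ^ #E := by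
  refine (card_le_card fun z hz ↦ ?_).trans
    ((card_filter_forall_notMem_mem_le E (fun i ↦ {x i}) fun i ↦ (card_singleton _).le).trans_eq
      (by rw [one_pow, mul_one]))
  obtain rfl := mem_filter_univ _ |>.1 hz
  simpa [mem_hammingDiff] using fun i ↦ Eq.symm

theorem card_filter_hammingDiff_inter_eq_le (x y : ι → α) (E : Finset ι) :
    #{z | hammingDiff x z ∩ hammingDiff y z = E} ≤
      2 ^ Fintype.card ι * Fintype.card α ^ #E := by
  have h2 : 2 ^ #Eᶜ ≤ 2 ^ Fintype.card ι := Nat.pow_le_pow_right two_pos (card_le_univ _)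
  rw [mul_comm]
  refine (card_le_card fun z hz ↦ ?_).trans ((card_filter_forall_notMem_mem_le E
    (fun i ↦ {x i, y i}) fun i ↦ card_le_two).trans (Nat.mul_le_mul_left _ h2))
  obtain rfl := mem_filter_univ _ |>.1 hz
  simp only [mem_filter_univ, mem_inter, mem_hammingDiff, mem_insert, mem_singleton]
  grind

theorem sub_two_pow_card_le_card_filter_hammingDiff_eq {x y : ι → α} {E : Finset ι}
    (hE : hammingDiff x y ⊆ E) :
    (Fintype.card α - 2) ^ #E ≤ #{z | hammingDiff x z = E ∧ hammingDiff y z = E} := by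
  let A (i : ι) : Finset α := if i ∈ E then {x i, y i}ᶜ else {x i}
  have hA : Fintype.piFinset A ⊆ ({z | hammingDiff x z = E ∧ hammingDiff y z = E} : Finset _) := by
    intro z hz
    rw [Fintype.mem_piFinset] at hz
    simp only [mem_filter_univ, Finset.ext_iff, mem_hammingDiff, ← forall_and]
    intro i
    have hi := hz i
    have hEi := @hE i
    rw [mem_hammingDiff] at hEi
    by_cases h : i ∈ E
    · simp only [A, h, if_true, mem_compl, mem_insert, mem_singleton] at hi
      grind
    · simp only [A, h, if_false, mem_singleton] at hi
      grind
  refine le_trans ?_ (card_le_card hA)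
  rw [Fintype.card_piFinset, ← prod_mul_prod_compl E]
  rw [prod_congr rfl (fun i hi ↦ by simp [A, mem_compl.1 hi] : ∀ i ∈ Eᶜ, #(A i) = 1),
    prod_const_one, mul_one]
  refine pow_card_le_prod _ _ _ fun i hi ↦ ?_
  simp only [A, hi, if_true, card_compl]
  exact Nat.sub_le_sub_left card_le_two _

theorem card_supersetsOfCard_mul_le (x y : ι → α) (e : ℕ) :
    #(supersetsOfCard e (hammingDiff x y)) * (Fintype.card α - 2) ^ e ≤
      #{z | hammingDist x z = e ∧ hammingDist y z = e} := by
  rw [← mul_one #{z | _}]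
  refine card_mul_le_card_mul (fun E z ↦ hammingDiff x z = E ∧ hammingDiff y z = E)
    (fun E hE ↦ ?_) fun z _ ↦ card_le_one.2 fun E hE E' hE' ↦ ?_
  · obtain ⟨rfl, hxyE⟩ := mem_supersetsOfCard.1 hE
    refine (sub_two_pow_card_le_card_filter_hammingDiff_eq hxyE).trans (card_le_card fun z hz ↦ ?_)
    obtain ⟨hxz, hyz⟩ := mem_filter_univ _ |>.1 hz
    exact mem_bipartiteAbove _ |>.2
      ⟨mem_filter_univ _ |>.2 ⟨congrArg card hxz, congrArg card hyz⟩, hxz, hyz⟩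
  · exact (mem_filter.1 hE).2.1.symm.trans (mem_filter.1 hE').2.1

theorem card_filter_hammingDist_le_inter_eq_le (x y : ι → α) {e : ℕ}
    (hα : 1 ≤ Fintype.card α) (E : Finset ι) :
    #{z | (hammingDist x z ≤ e ∧ hammingDist y z ≤ e) ∧ hammingDiff x z ∩ hammingDiff y z = E} ≤
      (if E ∈ supersetsOfCard e (hammingDiff x y) then Fintype.card α ^ e else 0) +
        2 ^ Fintype.card ι * Fintype.card α ^ (e - 1) := by
  rcases lt_or_ge #E e with hE | hE
  · refine le_add_left ((card_le_card fun z hz ↦ ?_).trans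
      ((card_filter_hammingDiff_inter_eq_le x y E).trans
        (Nat.mul_le_mul_left _ (Nat.pow_le_pow_right hα (Nat.le_sub_one_of_lt hE)))))
    exact mem_filter_univ _ |>.2 (mem_filter_univ _ |>.1 hz).2
  have heq {z : ι → α} (hxz : hammingDist x z ≤ e) (hyz : hammingDist y z ≤ e)
      (hz : hammingDiff x z ∩ hammingDiff y z = E) : hammingDiff x z = E ∧ hammingDiff y z = E :=
    ⟨(eq_of_subset_of_card_le (hz ▸ inter_subset_left) (hxz.trans hE)).symm,
      (eq_of_subset_of_card_le (hz ▸ inter_subset_right) (hyz.trans hE)).symm⟩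
  rcases eq_empty_or_nonempty ({z | (hammingDist x z ≤ e ∧ hammingDist y z ≤ e) ∧
    hammingDiff x z ∩ hammingDiff y z = E} : Finset (ι → α)) with h | ⟨z, hz⟩
  · simp [h]
  obtain ⟨⟨hxz, hyz⟩, hz⟩ := mem_filter_univ _ |>.1 hz
  obtain ⟨hxE, hyE⟩ := heq hxz hyz hz
  have hEe : #E = e := le_antisymm (hxE ▸ hxz) hE
  have hxyE : hammingDiff x y ⊆ E := by
    simpa only [hxE, hyE, union_self] using hammingDiff_subset_union x y z
  rw [if_pos (mem_supersetsOfCard.2 ⟨hEe, hxyE⟩)]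
  refine le_add_right ((card_le_card fun w hw ↦ ?_).trans
    (hEe ▸ card_filter_hammingDiff_eq_le x E))
  obtain ⟨⟨hxw, hyw⟩, hw⟩ := mem_filter_univ _ |>.1 hw
  exact mem_filter_univ _ |>.2 (heq hxw hyw hw).1

/-- A word `z` counted here either differs from both `x` and `y` in fewer than `e` common places,
or differs from each of them in the same `e` places. -/
theorem card_filter_hammingDist_le_le (x y : ι → α) {e : ℕ}
    (hα : 1 ≤ Fintype.card α) :
    #{z | hammingDist x z ≤ e ∧ hammingDist y z ≤ e} ≤
      #(supersetsOfCard e (hammingDiff x y)) * Fintype.card α ^ e +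
        4 ^ Fintype.card ι * Fintype.card α ^ (e - 1) := by
  rw [card_eq_sum_card_fiberwise (f := fun z ↦ hammingDiff x z ∩ hammingDiff y z)
    (t := univ) fun _ _ ↦ mem_univ _]
  simp only [filter_filter]
  refine (sum_le_sum fun E _ ↦ card_filter_hammingDist_le_inter_eq_le x y hα E).trans_eq ?_
  rw [sum_add_distrib, sum_ite_mem, univ_inter, sum_const, sum_const, smul_eq_mul, smul_eq_mul,
    card_univ, Fintype.card_finset, ← mul_assoc, ← mul_pow]
  rfl

end Counting

theorem pow_le_sub_two_pow_add {a : ℕ} (ha : 2 ≤ a) (e : ℕ) :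
    a ^ e ≤ (a - 2) ^ e + 2 * e * a ^ (e - 1) := by
  have h := (le_abs_self _).trans (abs_pow_sub_pow_le (a : ℤ) (a - 2 : ℕ) e)
  rw [max_eq_left (by simp)] at h
  zify [ha] at h ⊢
  simp only [sub_sub_cancel, Nat.abs_ofNat, Nat.abs_cast, tsub_le_iff_right] at h
  linarith

theorem mul_pow_add_lt_add_one_mul_sub_two_pow {t a e c : ℕ} (he : 1 ≤ e) (het : e < t)
    (hc : c < 2 ^ t) (ha : 3 * 4 ^ t < a) :
    c * a ^ e + 4 ^ t * a ^ (e - 1) < (c + 1) * (a - 2) ^ e := by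
  have hb := Nat.mul_le_mul_left (c + 1) (pow_le_sub_two_pow_add (a := a)
    (by have := Nat.one_le_pow t 4 (by norm_num); omega) e)
  have hlt : 4 ^ t + (c + 1) * (2 * e) < a := by
    have : e < 2 ^ t := het.trans t.lt_two_pow_self
    have : (c + 1) * e ≤ 2 ^ t * 2 ^ t := Nat.mul_le_mul hc (by omega)
    rw [← mul_pow, show 2 * 2 = 4 from rfl] at this
    linarith
  have hlt' := Nat.mul_lt_mul_of_pos_right hlt (show 0 < a ^ (e - 1) by apply Nat.pow_pos; omega)
  rw [← Nat.pow_succ', Nat.succ_eq_add_one, Nat.sub_add_cancel he] at hlt'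
  linarith

section Maximality

variable {ι α : Type*} [Fintype ι] [Fintype α] [DecidableEq α]

theorem card_supersetsOfCard_le [DecidableEq ι] (e : ℕ) (I : Finset ι) :
    #(supersetsOfCard e I) ≤ 2 ^ Fintype.card ι :=
  (card_le_univ _).trans_eq Fintype.card_finset

theorem card_filter_and_lt [DecidableEq ι] {D : (ι → α) → (ι → α) → Prop} [DecidableRel D] {e : ℕ}
    (hle : ∀ x y, D x y → hammingDist x y ≤ e) (heq : ∀ x y, hammingDist x y = e → D x y)
    (he : 1 ≤ e) (heι : e < Fintype.card ι) (hα : 3 * 4 ^ Fintype.card ι < Fintype.card α)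
    {x y y' : ι → α} (hlt : hammingDiff x y' ⊂ hammingDiff x y) (hy' : hammingDist x y' ≤ e) :
    #{z | D x z ∧ D y z} < #{z | D x z ∧ D y' z} := by
  have hc := card_supersetsOfCard_lt heι hlt hy'
  calc #{z | D x z ∧ D y z} ≤ #{z | hammingDist x z ≤ e ∧ hammingDist y z ≤ e} :=
        card_le_card (monotone_filter_right _ fun z _ hz ↦ ⟨hle _ _ hz.1, hle _ _ hz.2⟩)
    _ ≤ _ := card_filter_hammingDist_le_le x y (by omega)
    _ < _ := mul_pow_add_lt_add_one_mul_sub_two_pow he heι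
      (hc.trans_le (card_supersetsOfCard_le _ _)) hα
    _ ≤ _ := Nat.mul_le_mul_right _ (Nat.succ_le_of_lt hc)
    _ ≤ _ := card_supersetsOfCard_mul_le x y' e
    _ ≤ _ := card_le_card (monotone_filter_right _ fun z _ hz ↦ ⟨heq _ _ hz.1, heq _ _ hz.2⟩)

theorem card_filter_and_apply {Ω : Type*} [Fintype Ω] {D : Ω → Ω → Prop} [DecidableRel D]
    {g : Perm Ω} (hg : ∀ x y, D (g x) (g y) ↔ D x y) (x y : Ω) :
    #{z | D (g x) z ∧ D (g y) z} = #{z | D x z ∧ D y z} :=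
  (card_equiv g fun z ↦ by simp [hg]).symm

theorem le_hammingIsometries_of_invariant {L : Subgroup (Perm (ι → α))}
    (hL : hammingIsometries ι α ≤ L) {D : (ι → α) → (ι → α) → Prop}
    (hD : ∀ g ∈ L, ∀ x y, D (g x) (g y) ↔ D x y) {e : ℕ}
    (hle : ∀ x y, D x y → hammingDist x y ≤ e) (heq : ∀ x y, hammingDist x y = e → D x y)
    (he : 1 ≤ e) (heι : e < Fintype.card ι) (hα : 3 * 4 ^ Fintype.card ι < Fintype.card α) :
    L ≤ hammingIsometries ι α := by
  classical
  refine le_hammingIsometries fun g hg x y hxy ↦ ?_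
  have hne : g x ≠ g y := g.injective.ne (hammingDist_ne_zero.1 (by omega))
  obtain ⟨i, hi⟩ := Function.ne_iff.1 hne
  by_contra hgxy
  set w := Function.update (g x) i (g y i)
  have hw : hammingDist (g x) w = 1 := hammingDist_update_self hi.symm
  have hlt : hammingDiff (g x) w ⊂ hammingDiff (g x) (g y) := by
    rw [hammingDiff_update_self hi.symm]
    refine ssubset_of_subset_of_ne (singleton_subset_iff.2 (mem_hammingDiff.2 hi)) fun h ↦ hgxy ?_
    rw [← card_hammingDiff, ← h, card_singleton]
  obtain ⟨h, hh, hhx, hhy⟩ := exists_mem_hammingIsometries_apply_eq (hxy.trans hw.symm)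
  have hcard := card_filter_and_lt hle heq he heι hα hlt (hw.trans_le he)
  have hcard_h := card_filter_and_apply (hD h (hL hh)) x y
  rw [hhx, hhy, ← card_filter_and_apply (hD g hg) x y] at hcard_h
  exact hcard.ne' hcard_h

/-- The pairs of distinct words outside the `L`-orbit of the pairs at the largest distance form an
`L`-invariant graph, which determines the isometries unless it is empty. -/
theorem isMultiplyPretransitive_or_le_hammingIsometries {L : Subgroup (Perm (ι → α))}
    (hL : hammingIsometries ι α ≤ L) (hα : 3 * 4 ^ Fintype.card ι < Fintype.card α) :
    MulAction.IsMultiplyPretransitive L (ι → α) 2 ∨ L ≤ hammingIsometries ι α := by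
  classical
  let D (x y : ι → α) : Prop :=
    x ≠ y ∧ ∀ g ∈ L, hammingDist (g x) (g y) ≠ Fintype.card ι
  have hD : ∀ g ∈ L, ∀ x y, D (g x) (g y) ↔ D x y := by
    refine fun g hg x y ↦ and_congr g.injective.ne_iff ⟨fun h k hk ↦ ?_, fun h k hk ↦ ?_⟩
    · simpa using h (k * g⁻¹) (L.mul_mem hk (L.inv_mem hg))
    · exact h (k * g) (L.mul_mem hk hg)
  rcases eq_empty_or_nonempty ({p | D p.1 p.2} : Finset ((ι → α) × (ι → α))) with h | h
  · left
    have hfar {x y : ι → α} (hxy : x ≠ y) : ∃ g ∈ L, hammingDist (g x) (g y) = Fintype.card ι := by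
      simpa [D, hxy] using notMem_empty (x, y) ∘ (h ▸ ·)
    refine MulAction.is_two_pretransitive_iff.2 fun {x y z w} hxy hzw ↦ ?_
    obtain ⟨g, hg, hgxy⟩ := hfar hxy
    obtain ⟨h, hh, hhzw⟩ := hfar hzw
    obtain ⟨k, hk, hkx, hky⟩ := exists_mem_hammingIsometries_apply_eq (hgxy.trans hhzw.symm)
    refine ⟨⟨h⁻¹ * (k * g), L.mul_mem (L.inv_mem hh) (L.mul_mem (hL hk) hg)⟩, ?_, ?_⟩ <;>
      simp [Subgroup.smul_def, hkx, hky]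
  · right
    obtain ⟨⟨x, y⟩, hxy, hmax⟩ := exists_max_image _ (fun p ↦ hammingDist p.1 p.2) h
    rw [mem_filter_univ] at hxy
    refine le_hammingIsometries_of_invariant hL hD (e := hammingDist x y)
      (fun x' y' h' ↦ hmax (x', y') (mem_filter_univ _ |>.2 h')) (fun x' y' h' ↦ ?_)
      (hammingDist_pos.2 hxy.1) (hammingDist_le_card_fintype.lt_of_ne (hxy.2 1 L.one_mem)) hα
    obtain ⟨g, hg, rfl, rfl⟩ := exists_mem_hammingIsometries_apply_eq h'.symm
    exact (hD g (hL hg) x y).2 hxy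

end Maximality

section Coatom

variable {ι α : Type*}

/-- The permutation of words that applies `σ` to the letter in position `i`; for `σ` a transposition
it is an isometry moving few words. -/
def permLetter [DecidableEq ι] (i : ι) (σ : Perm α) : Perm (ι → α) :=
  Equiv.piCongrRight (Pi.mulSingle i σ)

theorem permLetter_apply [DecidableEq ι] (i : ι) (σ : Perm α) (x : ι → α) :
    permLetter i σ x = Function.update x i (σ (x i)) := by
  ext j
  rcases eq_or_ne j i with rfl | hj <;> simp [permLetter, Equiv.piCongrRight, *]

variable [Fintype ι] [DecidableEq α]

theorem permLetter_mem_hammingIsometries [DecidableEq ι] (i : ι) (σ : Perm α) :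
    permLetter i σ ∈ hammingIsometries ι α :=
  piCongr_mem_hammingIsometries (Equiv.refl ι) (Pi.mulSingle i σ)

theorem sign_permLetter [DecidableEq ι] [Fintype α] (i : ι) (σ : Perm α) :
    Perm.sign (permLetter i σ) = Perm.sign σ ^ Fintype.card α ^ (Fintype.card ι - 1) := by
  rw [Perm.sign_eq_sign_of_equiv (permLetter i σ) (prodCongrLeft fun _ : {j // j ≠ i} → α ↦ σ)
    (Equiv.piSplitAt i fun _ ↦ α), Perm.sign_prodCongrLeft]
  · simp
  · intro x
    ext j
    · simp [permLetter_apply]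
    · simp [permLetter_apply, j.2]

theorem card_support_permLetter [DecidableEq ι] [Fintype α] (i : ι) (σ : Perm α) :
    #(permLetter i σ).support = #σ.support * Fintype.card α ^ (Fintype.card ι - 1) := by
  have h : (permLetter i σ).support =
      Fintype.piFinset (Function.update (fun _ ↦ univ) i σ.support) := by
    ext x
    rw [Perm.mem_support, permLetter_apply, Function.update_ne_self_iff, Fintype.mem_piFinset]
    refine ⟨fun hi j ↦ ?_, fun hx ↦ ?_⟩
    · rcases eq_or_ne j i with rfl | hj <;> simp [*]
    · simpa using hx i
  rw [h, Fintype.card_piFinset]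
  simp only [Function.apply_update (fun _ ↦ card)]
  rw [prod_update_of_mem (mem_univ _)]
  simp [card_sdiff, card_univ]

theorem hammingIsometries_ne_top [Nontrivial ι] [Nontrivial α] : hammingIsometries ι α ≠ ⊤ := by
  classical
  intro h
  obtain ⟨i, j, hij⟩ := exists_pair_ne ι
  obtain ⟨a, b, hab⟩ := exists_pair_ne α
  let x : ι → α := fun _ ↦ a
  let y := Function.update x i b
  let z := Function.update y j b
  have hxy : hammingDist x y = 1 := hammingDist_update_self hab.symm
  have hxz : 1 < hammingDist x z :=
    one_lt_card.2 ⟨i, by simp [x, y, z, hij, hab], j, by simp [x, z, hab], hij⟩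
  have hswap : swap y z ∈ hammingIsometries ι α := h ▸ Subgroup.mem_top _
  have hdist := hswap x y
  rw [swap_apply_left, swap_apply_of_ne_of_ne (hammingDist_ne_zero.1 (by omega))
    (hammingDist_ne_zero.1 (by omega))] at hdist
  omega

theorem eq_top_of_alternatingGroup_le {Ω : Type*} [Fintype Ω] [DecidableEq Ω]
    {L : Subgroup (Perm Ω)} (hL : alternatingGroup Ω ≤ L) {g : Perm Ω} (hg : g ∈ L)
    (hsign : Perm.sign g = -1) : L = ⊤ := by
  refine eq_top_iff.2 fun h _ ↦ ?_
  rcases Int.units_eq_one_or (Perm.sign h) with hh | hh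
  · exact hL (Perm.mem_alternatingGroup.2 hh)
  · refine (L.mul_mem_cancel_right hg).1 (hL (Perm.mem_alternatingGroup.2 ?_))
    rw [Perm.sign_mul, hh, hsign, neg_mul_neg, one_mul]

theorem four_mul_two_mul_pow_add_six_lt {a t : ℕ} (ht : 1 < t) (ha : 3 * 4 ^ t < a) :
    4 * (2 * a ^ (t - 1)) + 6 < a ^ t := by
  have h16 : 4 ^ 2 ≤ 4 ^ t := Nat.pow_le_pow_right (by norm_num) ht
  have hpos : 1 ≤ a ^ (t - 1) := Nat.one_le_pow _ _ (by omega)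
  calc 4 * (2 * a ^ (t - 1)) + 6 < 15 * a ^ (t - 1) := by omega
    _ ≤ a * a ^ (t - 1) := Nat.mul_le_mul_right _ (by omega)
    _ = a ^ t := by rw [← Nat.pow_succ', Nat.succ_eq_add_one, Nat.sub_add_cancel ht.le]

/-- A larger group is doubly transitive, and contains the odd permutation `permLetter i (swap a b)`,
whose support is so small that the group must contain the alternating group. -/
theorem isCoatom_hammingIsometries [Fintype α] [Nontrivial ι]
    (hα : 3 * 4 ^ Fintype.card ι < Fintype.card α) (hodd : Odd (Fintype.card α)) :
    IsCoatom (hammingIsometries ι α) := by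
  classical
  have : Nontrivial α := Fintype.one_lt_card_iff_nontrivial.1 (by
    have := Nat.one_le_pow (Fintype.card ι) 4 (by norm_num)
    omega)
  refine ⟨hammingIsometries_ne_top, fun L hL ↦ ?_⟩
  have h2 := (isMultiplyPretransitive_or_le_hammingIsometries hL.le hα).resolve_right hL.not_ge
  obtain ⟨a, b, hab⟩ := exists_pair_ne α
  obtain ⟨i⟩ : Nonempty ι := inferInstance
  have hg := hL.le (permLetter_mem_hammingIsometries i (swap a b))
  have hsign : Perm.sign (permLetter i (swap a b)) = -1 := by
    rw [sign_permLetter, Perm.sign_swap hab, hodd.pow.neg_one_pow]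
  refine eq_top_of_alternatingGroup_le
    (alternatingGroup_le_of_isMultiplyPretransitive h2 hg ?_ ?_) hg hsign
  · intro h
    simp [h] at hsign
  · rw [card_support_permLetter, Perm.card_support_swap hab, Fintype.card_fun]
    exact four_mul_two_mul_pow_add_six_lt Fintype.one_lt_card hα

end Coatom

section WordStabilizer

variable {ι α F : Type*} [Fintype ι] [DecidableEq α]

/-- The stabilizer of a word in the group of isometries of the Hamming space. -/
def wordStabilizer (x : ι → α) : Subgroup (Perm (ι → α)) :=
  (MulAction.stabilizer (hammingIsometries ι α) x).map (hammingIsometries ι α).subtype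

theorem hammingDist_apply_of_mem_wordStabilizer {x : ι → α} {g : Perm (ι → α)}
    (hg : g ∈ wordStabilizer x) (y : ι → α) : hammingDist x (g y) = hammingDist x y := by
  obtain ⟨h, hhx, rfl⟩ := hg
  have hx : (h : Perm (ι → α)) x = x := hhx
  simpa [hx] using h.2 x y

theorem wordStabilizer_covBy [Finite α] [Nonempty ι] (hα : 2 < Nat.card α) (x : ι → α) :
    wordStabilizer x ⋖ hammingIsometries ι α := by
  have := isPreprimitive_hammingIsometries (ι := ι) hα
  have : Nontrivial α := Finite.one_lt_card_iff_nontrivial.1 (by omega)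
  exact isCoatom_iff_map_subtype_covBy.1
    (MulAction.IsPreprimitive.isCoatom_stabilizer_of_isPreprimitive _ x)

theorem exists_hammingDist_eq [Nontrivial α] (x : ι → α) {d : ℕ} (hd : d ≤ Fintype.card ι) :
    ∃ y, hammingDist x y = d := by
  classical
  obtain ⟨E, -, rfl⟩ := exists_subset_card_eq (s := univ) (card_univ (α := ι) ▸ hd)
  choose v hv using fun i ↦ exists_ne (x i)
  refine ⟨fun i ↦ if i ∈ E then v i else x i, congrArg card (Finset.ext fun i ↦ ?_)⟩
  by_cases hi : i ∈ E <;> simp [hi, (hv i).symm]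

theorem isThirdMaximal_imprimitiveWreath_wordStabilizer [Fintype α] [Nontrivial ι] [Finite F]
    [Nontrivial F] (hα : 3 * 4 ^ Fintype.card ι < Fintype.card α) (hodd : Odd (Fintype.card α))
    (x : ι → α) : IsThirdMaximal (imprimitiveWreath F (wordStabilizer x)) := by
  have : 2 < Fintype.card α := by
    have := Nat.one_le_pow (Fintype.card ι) 4 (by norm_num)
    omega
  have : Nontrivial α := Fintype.one_lt_card_iff_nontrivial.1 (by omega)
  refine isThirdMaximal_of_covBy isCoatom_imprimitiveWreath_top
    (imprimitiveWreath_covBy (isCoatom_hammingIsometries hα hodd).covBy_top)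
    (imprimitiveWreath_covBy (wordStabilizer_covBy ?_ x))
  rwa [Nat.card_eq_fintype_card]

theorem card_lt_rank_imprimitiveWreath_wordStabilizer [Finite α] [Nontrivial α] [Finite F]
    [Nontrivial F] (x : ι → α) :
    Fintype.card ι < Group.rank (imprimitiveWreath F (wordStabilizer x)) := by
  classical
  obtain ⟨a, b, hab⟩ := exists_pair_ne F
  let f (p : (ι → α) × F) : Fin (Fintype.card ι + 1) :=
    ⟨hammingDist x p.1, Nat.lt_succ_of_le hammingDist_le_card_fintype⟩
  rw [← Nat.add_one_le_iff, ← Fintype.card_fin (Fintype.card ι + 1)]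
  refine card_le_rank_of_swap_mem (f := f) (fun g hg p ↦ ?_) fun k ↦ ?_
  · obtain ⟨σ, hσ, hgσ⟩ := mem_imprimitiveWreath.1 hg
    exact Fin.ext (by simp only [f, hgσ, hammingDist_apply_of_mem_wordStabilizer hσ])
  · obtain ⟨y, hy⟩ := exists_hammingDist_eq x (Nat.le_of_lt_succ k.2)
    exact ⟨(y, a), (y, b), by simp [hab], Fin.ext hy, Fin.ext hy, swap_mem_imprimitiveWreath _ rfl⟩

end WordStabilizer

/-- For every real number `c` there is a third maximal subgroup `M` of a finite
almost simple group with `d(M) > c`. -/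
theorem third_maximal_unbounded_generation :
    ∀ c : ℝ, ∃ (G : Type) (_ : Group G) (_ : Fintype G), IsAlmostSimple G ∧
      ∃ M : Subgroup G, IsThirdMaximal M ∧ c < (minGen ↥M : ℝ) := by
  intro c
  obtain ⟨n, hn⟩ := exists_nat_gt c
  let t := n + 2
  let Word := Fin t → Fin (3 * 4 ^ t + 1)
  have hodd : Odd (3 * 4 ^ t + 1) :=
    ((Even.pow_of_ne_zero (by decide) (by omega)).mul_left 3).add_one
  have hcard : 5 ≤ Fintype.card (Word × Bool) := by
    have h4 : 1 ≤ 4 ^ t := Nat.one_le_pow t 4 (by norm_num)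
    have hpow : 3 * 4 ^ t + 1 ≤ (3 * 4 ^ t + 1) ^ t := Nat.le_self_pow (by omega) _
    simp only [Word, Fintype.card_prod, Fintype.card_fun, Fintype.card_fin, Fintype.card_bool]
    omega
  have hrank : t < Group.rank (imprimitiveWreath Bool (wordStabilizer (0 : Word))) := by
    simpa using card_lt_rank_imprimitiveWreath_wordStabilizer (F := Bool) (0 : Word)
  refine ⟨Perm (Word × Bool), inferInstance, inferInstance, isAlmostSimple_perm hcard,
    imprimitiveWreath Bool (wordStabilizer 0),
    isThirdMaximal_imprimitiveWreath_wordStabilizer (by simp) (by simpa using hodd) 0, ?_⟩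
  rw [minGen_eq_rank]
  exact hn.trans (Nat.cast_lt.2 ((by omega : n < t).trans hrank))
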